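/- arXiv:1010.4897 — 2 statements merged into one kernel-verified Lean document; each statement's English description precedes it below -/
import Mathlib

section
/- Let σ act on (ℂ^×)⁴ by σ(z, w, u, v) = (conj(w), conj(z), conj(v), conj(u)), let M = {(z, w, u, v) ∈ (ℂ^×)⁴ : z·w = u·v} and N = {(z, w, u, v) ∈ (ℂ^×)⁴ : z·w = 1 and u·v = 1}; both M and N are σ-stable subgroups. Then: (i) the cohomology group H¹(σ, M) := {m ∈ M : m·σ(m) = 1} / {q·σ(q)⁻¹ : q ∈ M} has exactly 2 elements; and (ii) the natural map H¹(σ, N) → H¹(σ, M) induced by the inclusion N ⊆ M is surjective, i.e., for every m ∈ M with m·σ(m) = 1 there exist n ∈ N with n·σ(n) = 1 and q ∈ M such that m = n·q·σ(q)⁻¹. In particular, the image of H¹(σ, N) → H¹(σ, M) has exactly 2 elements. -/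
noncomputable section

/-- Complex conjugation on `ℂˣ`. -/
def conjUnits : ℂˣ →* ℂˣ := Units.map (starRingEnd ℂ)

/-- The Galois action `σ(z, w, u, v) = (conj w, conj z, conj v, conj u)` on `(ℂˣ)⁴`,
as a group homomorphism. -/
def sigma4 : (ℂˣ × ℂˣ × ℂˣ × ℂˣ) →* (ℂˣ × ℂˣ × ℂˣ × ℂˣ) :=
  MonoidHom.mk'
    (fun x => (conjUnits x.2.1, conjUnits x.1, conjUnits x.2.2.2, conjUnits x.2.2.1))
    (by intro a b; simp [Prod.ext_iff, map_mul])

/-- The subgroup `M = {(z,w,u,v) : z·w = u·v}` of `(ℂˣ)⁴`. -/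
def Msub : Subgroup (ℂˣ × ℂˣ × ℂˣ × ℂˣ) where
  carrier := {x | x.1 * x.2.1 = x.2.2.1 * x.2.2.2}
  one_mem' := by simp
  mul_mem' := by
    intro a b ha hb
    simp only [Set.mem_setOf_eq, Prod.fst_mul, Prod.snd_mul] at *
    rw [mul_mul_mul_comm, ha, hb, mul_mul_mul_comm]
  inv_mem' := by
    intro a ha
    simp only [Set.mem_setOf_eq, Prod.fst_inv, Prod.snd_inv] at *
    rw [← mul_inv, ha, mul_inv]

/-- The subgroup `N = {(z,w,u,v) : z·w = 1 and u·v = 1}` of `(ℂˣ)⁴`. -/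
def Nsub : Subgroup (ℂˣ × ℂˣ × ℂˣ × ℂˣ) where
  carrier := {x | x.1 * x.2.1 = 1 ∧ x.2.2.1 * x.2.2.2 = 1}
  one_mem' := by simp
  mul_mem' := by
    intro a b ha hb
    simp only [Set.mem_setOf_eq, Prod.fst_mul, Prod.snd_mul] at *
    constructor
    · rw [mul_mul_mul_comm, ha.1, hb.1, one_mul]
    · rw [mul_mul_mul_comm, ha.2, hb.2, one_mul]
  inv_mem' := by
    intro a ha
    simp only [Set.mem_setOf_eq, Prod.fst_inv, Prod.snd_inv] at *
    constructor
    · rw [← mul_inv, ha.1, inv_one]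
    · rw [← mul_inv, ha.2, inv_one]

lemma sigma4_mem_Msub {x : ℂˣ × ℂˣ × ℂˣ × ℂˣ} (hx : x ∈ Msub) : sigma4 x ∈ Msub := by
  have hx' : x.1 * x.2.1 = x.2.2.1 * x.2.2.2 := hx
  show conjUnits x.2.1 * conjUnits x.1 = conjUnits x.2.2.2 * conjUnits x.2.2.1
  rw [← map_mul, ← map_mul, mul_comm x.2.1, hx', mul_comm]

/-- The restriction of `σ` to the subgroup `M`. -/
def sigmaM : ↥Msub →* ↥Msub :=
  (sigma4.comp Msub.subtype).codRestrict Msub fun x => sigma4_mem_Msub x.2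

/-- The group of `σ`-cocycles `{a : a·σ(a) = 1}` of a commutative group. -/
def cocycles {A : Type*} [CommGroup A] (σ : A →* A) : Subgroup A where
  carrier := {a | a * σ a = 1}
  one_mem' := by simp
  mul_mem' := by
    intro a b ha hb
    simp only [Set.mem_setOf_eq, map_mul] at *
    rw [mul_mul_mul_comm, ha, hb, one_mul]
  inv_mem' := by
    intro a ha
    simp only [Set.mem_setOf_eq, map_inv] at *
    rw [← mul_inv, ha, inv_one]

/-- The group of `σ`-coboundaries `{q·σ(q)⁻¹}` of a commutative group. -/
def boundaries {A : Type*} [CommGroup A] (σ : A →* A) : Subgroup A :=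
  MonoidHom.range <| MonoidHom.mk' (fun q => q * (σ q)⁻¹)
    (by intro a b; simp only [map_mul, mul_inv]; exact mul_mul_mul_comm a b _ _)

/-- The first cohomology group `H¹(σ, A) = {a : a·σ(a) = 1}/{q·σ(q)⁻¹}`. -/
abbrev H1 {A : Type*} [CommGroup A] (σ : A →* A) : Type _ :=
  ↥(cocycles σ) ⧸ ((boundaries σ).subgroupOf (cocycles σ))

lemma key_real (z w u v : ℂˣ) (hM : z * w = u * v) (h1 : w * conjUnits z = 1)
    (h2 : v * conjUnits u = 1) : ∃ r : ℝ, r ≠ 0 ∧ (z : ℂ) = r * u := by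
  have hM' : (z : ℂ) * w = u * v := by exact_mod_cast congrArg Units.val hM
  have h1' : (w : ℂ) * (starRingEnd ℂ) z = 1 := congrArg Units.val h1
  have h2' : (v : ℂ) * (starRingEnd ℂ) u = 1 := congrArg Units.val h2
  have hu : (u : ℂ) ≠ 0 := u.ne_zero
  have hz : (z : ℂ) ≠ 0 := z.ne_zero
  have hcu : (starRingEnd ℂ) (u : ℂ) ≠ 0 := by simpa using hu
  have hc : (starRingEnd ℂ) ((z : ℂ) / u) = z / u := by
    rw [map_div₀, div_eq_div_iff hcu hu]
    linear_combination (-(u:ℂ) * (starRingEnd ℂ) z) * h2' +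
      (z * (starRingEnd ℂ) (u : ℂ)) * h1' -
      ((starRingEnd ℂ) (z : ℂ) * (starRingEnd ℂ) (u : ℂ)) * hM'
  obtain ⟨r, hr⟩ := Complex.conj_eq_iff_real.1 hc
  have hzr : (z : ℂ) = r * u := by rw [← hr]; field_simp
  refine ⟨r, ?_, hzr⟩
  rintro rfl
  simp at hzr

lemma key_pos (z w u v : ℂˣ) (h1 : w * conjUnits z = 1)
    (h2 : v * conjUnits u = 1) (r : ℝ) (hr : 0 < r) (hz : (z : ℂ) = r * u) :
    ∃ q ∈ Msub, ((z, w, u, v) : ℂˣ × ℂˣ × ℂˣ × ℂˣ) = q * (sigma4 q)⁻¹ := by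
  have hs : ((Real.sqrt r : ℝ) : ℂ) ≠ 0 := by
    exact_mod_cast (Real.sqrt_pos.2 hr).ne'
  let d : ℂˣ := Units.mk0 _ hs
  have hd : conjUnits d = d := by
    ext; exact Complex.conj_ofReal _
  have hdd : z = u * d * d := by
    ext
    rw [hz]
    have : ((Real.sqrt r : ℝ) : ℂ) * (Real.sqrt r : ℝ) = r := by
      exact_mod_cast Real.mul_self_sqrt hr.le
    simp only [Units.val_mul, d, Units.val_mk0]
    rw [mul_assoc, this, mul_comm]
  refine ⟨(z, 1, u * d, d), ?_, ?_⟩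
  · show z * 1 = u * d * d
    rw [mul_one, hdd]
  · show _ = ((z * (conjUnits 1)⁻¹, 1 * (conjUnits z)⁻¹, u * d * (conjUnits d)⁻¹,
      d * (conjUnits (u * d))⁻¹) : ℂˣ × ℂˣ × ℂˣ × ℂˣ)
    rw [map_mul, hd, eq_inv_of_mul_eq_one_left h1, eq_inv_of_mul_eq_one_left h2]
    simp

/-- The nontrivial class. -/
def n0 : ℂˣ × ℂˣ × ℂˣ × ℂˣ := (-1, -1, 1, 1)

lemma conj_neg_one : conjUnits (-1) = -1 := by
  ext; simp [conjUnits]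

lemma n0_N : n0 ∈ Nsub := by
  show (-1 : ℂˣ) * -1 = 1 ∧ (1 : ℂˣ) * 1 = 1
  simp

lemma n0_M : n0 ∈ Msub := by
  show (-1 : ℂˣ) * -1 = 1 * 1
  simp

lemma n0_coc : n0 * sigma4 n0 = 1 := by
  show ((-1 * conjUnits (-1), -1 * conjUnits (-1), 1 * conjUnits 1, 1 * conjUnits 1) :
    ℂˣ × ℂˣ × ℂˣ × ℂˣ) = (1, 1, 1, 1)
  simp [conj_neg_one]

lemma key (m : ℂˣ × ℂˣ × ℂˣ × ℂˣ) (hm : m ∈ Msub) (hc : m * sigma4 m = 1) :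
    (∃ q ∈ Msub, m = q * (sigma4 q)⁻¹) ∨ (∃ q ∈ Msub, m = n0 * (q * (sigma4 q)⁻¹)) := by
  obtain ⟨z, w, u, v⟩ := m
  have h1 : w * conjUnits z = 1 := congrArg (fun x => x.2.1) hc
  have h2 : v * conjUnits u = 1 := congrArg (fun x => x.2.2.2) hc
  obtain ⟨r, hr, hz⟩ := key_real z w u v hm h1 h2
  rcases lt_or_gt_of_ne hr with hr | hr
  · right
    obtain ⟨q, hq, e⟩ := key_pos (-z) (-w) u v (by
      rw [← neg_one_mul z, map_mul, conj_neg_one]; simpa using h1) h2 (-r) (by linarith)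
      (by push_cast; rw [hz]; ring)
    refine ⟨q, hq, ?_⟩
    rw [← e]
    show _ = ((-1 * -z, -1 * -w, 1 * u, 1 * v) : ℂˣ × ℂˣ × ℂˣ × ℂˣ)
    simp
  · exact Or.inl (key_pos z w u v h1 h2 r hr hz)

lemma n0_not (q : ℂˣ × ℂˣ × ℂˣ × ℂˣ) (hq : q ∈ Msub) : n0 ≠ q * (sigma4 q)⁻¹ := by
  intro h
  obtain ⟨a, b, c, d⟩ := q
  have h1 : -1 = a * (conjUnits b)⁻¹ := congrArg (fun x => x.1) h
  have h2 : 1 = c * (conjUnits d)⁻¹ := congrArg (fun x => x.2.2.1) h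
  rw [eq_mul_inv_iff_mul_eq] at h1 h2
  have hM : a * b = c * d := hq
  rw [← h1, ← h2] at hM
  have hM' : -1 * (starRingEnd ℂ) (b : ℂ) * b = 1 * (starRingEnd ℂ) (d : ℂ) * d :=
    congrArg Units.val hM
  have e : -Complex.normSq (b : ℂ) = Complex.normSq (d : ℂ) := by
    have : (-(Complex.normSq (b : ℂ)) : ℂ) = Complex.normSq (d : ℂ) := by
      rw [← Complex.mul_conj, ← Complex.mul_conj]
      linear_combination hM'
    exact_mod_cast this
  have := Complex.normSq_pos.2 b.ne_zero
  have := Complex.normSq_pos.2 d.ne_zero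
  linarith

lemma mem_coc (m : ↥Msub) : m ∈ cocycles sigmaM ↔ m.1 * sigma4 m.1 = 1 := by
  show m * sigmaM m = 1 ↔ _
  rw [Subtype.ext_iff]; rfl

lemma mem_bd (m : ↥Msub) :
    m ∈ boundaries sigmaM ↔ ∃ q ∈ Msub, m.1 = q * (sigma4 q)⁻¹ := by
  constructor
  · rintro ⟨q, rfl⟩
    exact ⟨q.1, q.2, rfl⟩
  · rintro ⟨q, hq, e⟩
    exact ⟨⟨q, hq⟩, Subtype.ext e.symm⟩

/-- The nontrivial cocycle. -/
def c0 : ↥(cocycles sigmaM) := ⟨⟨n0, n0_M⟩, (mem_coc _).2 n0_coc⟩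

lemma class_cases (x : H1 sigmaM) : x = 1 ∨ x = QuotientGroup.mk c0 := by
  induction x using QuotientGroup.induction_on with
  | H m =>
    rcases key m.1.1 m.1.2 ((mem_coc _).1 m.2) with h | ⟨q, hq, e⟩
    · left
      rw [QuotientGroup.eq_one_iff, Subgroup.mem_subgroupOf]
      exact (mem_bd _).2 h
    · right
      symm
      rw [QuotientGroup.eq, Subgroup.mem_subgroupOf]
      refine (mem_bd _).2 ⟨q, hq, ?_⟩
      show n0⁻¹ * m.1.1 = _
      rw [e, inv_mul_cancel_left]

lemma c0_ne : (1 : H1 sigmaM) ≠ QuotientGroup.mk c0 := by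
  intro h
  have h' := (QuotientGroup.eq_one_iff c0).1 h.symm
  rw [Subgroup.mem_subgroupOf] at h'
  obtain ⟨q, hq, e⟩ := (mem_bd _).1 h'
  exact n0_not q hq e

lemma card_H1 : Nat.card (H1 sigmaM) = 2 := by
  rw [Nat.card_eq_two_iff]
  refine ⟨1, QuotientGroup.mk c0, c0_ne, ?_⟩
  ext x
  simpa using class_cases x

/-- (i) `H¹(σ, M)` has exactly 2 elements; (ii) every `σ`-cocycle of `M` is,
modulo boundaries of `M`, a cocycle of `N`; in particular (iii) the image of
`H¹(σ, N) → H¹(σ, M)` has exactly 2 elements. -/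
theorem stmt_3 :
    Nat.card (H1 sigmaM) = 2 ∧
    (∀ m ∈ Msub, m * sigma4 m = 1 →
      ∃ n ∈ Nsub, n * sigma4 n = 1 ∧ ∃ q ∈ Msub, m = n * q * (sigma4 q)⁻¹) ∧
    Nat.card {c : H1 sigmaM | ∃ (n : ℂˣ × ℂˣ × ℂˣ × ℂˣ) (hn : n ∈ Msub),
      n ∈ Nsub ∧ ∃ h : (⟨n, hn⟩ : ↥Msub) ∈ cocycles sigmaM,
        c = QuotientGroup.mk (⟨⟨n, hn⟩, h⟩ : ↥(cocycles sigmaM))} = 2 := by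
  refine ⟨card_H1, ?_, ?_⟩
  · intro m hm hc
    rcases key m hm hc with ⟨q, hq, e⟩ | ⟨q, hq, e⟩
    · exact ⟨1, one_mem _, by simp, q, hq, by rw [one_mul]; exact e⟩
    · exact ⟨n0, n0_N, n0_coc, q, hq, by rw [mul_assoc]; exact e⟩
  · rw [← card_H1, ← Nat.card_univ (α := H1 sigmaM)]
    congr 2
    rw [Set.eq_univ_iff_forall]
    intro x
    rcases class_cases x with rfl | rfl
    · exact ⟨1, one_mem _, one_mem _, one_mem _, rfl⟩
    · exact ⟨n0, n0_M, n0_N, c0.2, rfl⟩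
end
end

section
/- Let J be the 4×4 complex matrix with rows (0,0,0,1), (0,0,−1,0), (0,1,0,0), (−1,0,0,0), and let GSp₄(ℂ) = {x ∈ GL₄(ℂ) : x·J·xᵀ = μ·J for some μ ∈ ℂ^×}. For g = [[g₁₁, g₁₂], [g₂₁, g₂₂]] and h = [[h₁₁, h₁₂], [h₂₁, h₂₂]] in GL₂(ℂ), let η(g, h) be the 4×4 matrix with rows (g₁₁, 0, 0, g₁₂), (0, h₁₁, h₁₂, 0), (0, h₂₁, h₂₂, 0), (g₂₁, 0, 0, g₂₂). Then η restricts to an injective group homomorphism on Ĥ = {(g, h) ∈ GL₂(ℂ) × GL₂(ℂ) : det g = det h} with values in GSp₄(ℂ), and the centralizer {x ∈ GSp₄(ℂ) : x·s = s·x} of the element s = diag(1, −1, −1, 1) in GSp₄(ℂ) is exactly the image η(Ĥ) = {η(g, h) : g, h ∈ GL₂(ℂ), det g = det h}. -/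
open Matrix

noncomputable section

/-- The symplectic form matrix `J`. -/
def J4 : Matrix (Fin 4) (Fin 4) ℂ :=
  !![0, 0, 0, 1; 0, 0, -1, 0; 0, 1, 0, 0; -1, 0, 0, 0]

/-- `GSp₄(ℂ) = {x ∈ GL₄(ℂ) : x·J·xᵀ = μ·J for some μ ∈ ℂˣ}`, as a set of matrices. -/
def GSp4C : Set (Matrix (Fin 4) (Fin 4) ℂ) :=
  {x | IsUnit x ∧ ∃ μ : ℂˣ, x * J4 * xᵀ = (μ : ℂ) • J4}

/-- The embedding `η(g, h)` of a pair of 2×2 matrices as a 4×4 matrix. -/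
def etaMap (g h : Matrix (Fin 2) (Fin 2) ℂ) : Matrix (Fin 4) (Fin 4) ℂ :=
  !![g 0 0, 0, 0, g 0 1;
     0, h 0 0, h 0 1, 0;
     0, h 1 0, h 1 1, 0;
     g 1 0, 0, 0, g 1 1]

/-- `Ĥ = {(g, h) ∈ GL₂(ℂ) × GL₂(ℂ) : det g = det h}`, as a set of pairs of matrices. -/
def HhatC : Set (Matrix (Fin 2) (Fin 2) ℂ × Matrix (Fin 2) (Fin 2) ℂ) :=
  {p | IsUnit p.1 ∧ IsUnit p.2 ∧ p.1.det = p.2.det}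

/-- The element `s = diag(1, −1, −1, 1)`. -/
def sMat : Matrix (Fin 4) (Fin 4) ℂ :=
  !![1, 0, 0, 0; 0, -1, 0, 0; 0, 0, -1, 0; 0, 0, 0, 1]

theorem etaMap_mul (a b c d : Matrix (Fin 2) (Fin 2) ℂ) :
    etaMap (a * c) (b * d) = etaMap a b * etaMap c d := by
  ext i j
  fin_cases i <;> fin_cases j <;>
    simp [etaMap, Matrix.mul_apply, Fin.sum_univ_succ]

theorem etaMap_one : etaMap 1 1 = 1 := by
  ext i j
  fin_cases i <;> fin_cases j <;> simp [etaMap]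

theorem etaMap_J (g h : Matrix (Fin 2) (Fin 2) ℂ) :
    etaMap g h * J4 * (etaMap g h)ᵀ =
      !![0, 0, 0, g.det; 0, 0, -h.det, 0; 0, h.det, 0, 0; -g.det, 0, 0, 0] := by
  ext i j
  fin_cases i <;> fin_cases j <;>
    simp [etaMap, J4, Matrix.mul_apply, Fin.sum_univ_succ, Matrix.det_fin_two] <;> ring

theorem etaMap_inj {a b c d : Matrix (Fin 2) (Fin 2) ℂ} (e : etaMap a b = etaMap c d) :
    a = c ∧ b = d := by
  have E := fun i j => congrFun (congrFun e i) j
  constructor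
  · ext i j
    fin_cases i <;> fin_cases j
    · simpa [etaMap] using E 0 0
    · simpa [etaMap] using E 0 3
    · simpa [etaMap] using E 3 0
    · simpa [etaMap] using E 3 3
  · ext i j
    fin_cases i <;> fin_cases j
    · simpa [etaMap] using E 1 1
    · simpa [etaMap] using E 1 2
    · simpa [etaMap] using E 2 1
    · simpa [etaMap] using E 2 2

theorem etaMap_mem (p : Matrix (Fin 2) (Fin 2) ℂ × Matrix (Fin 2) (Fin 2) ℂ)
    (hp : p ∈ HhatC) : etaMap p.1 p.2 ∈ GSp4C := by
  obtain ⟨h1, h2, h3⟩ := hp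
  refine ⟨?_, ?_⟩
  · obtain ⟨u, hu⟩ := h1
    obtain ⟨v, hv⟩ := h2
    rw [← hu, ← hv]
    refine ⟨⟨etaMap u v, etaMap ↑u⁻¹ ↑v⁻¹, ?_, ?_⟩, rfl⟩ <;>
      rw [← etaMap_mul] <;> simp only [Units.mul_inv, Units.inv_mul, etaMap_one]
  · obtain ⟨m, hm⟩ := (Matrix.isUnit_iff_isUnit_det _).1 h1
    refine ⟨m, ?_⟩
    rw [etaMap_J, hm, ← h3]
    ext i j
    fin_cases i <;> fin_cases j <;> simp [J4]

theorem eq_etaMap_of_comm (x : Matrix (Fin 4) (Fin 4) ℂ) (hx : x * sMat = sMat * x) :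
    x = etaMap !![x 0 0, x 0 3; x 3 0, x 3 3] !![x 1 1, x 1 2; x 2 1, x 2 2] := by
  have E := fun i j => congrFun (congrFun hx i) j
  ext i j
  have e := E i j
  fin_cases i <;> fin_cases j <;>
    simp [etaMap, sMat, Matrix.mul_apply, Fin.sum_univ_succ] at e ⊢ <;>
    first
    | linear_combination e / 2
    | linear_combination -e / 2
    | grind

theorem etaMap_comm (g h : Matrix (Fin 2) (Fin 2) ℂ) :
    etaMap g h * sMat = sMat * etaMap g h := by
  ext i j
  fin_cases i <;> fin_cases j <;>
    simp [etaMap, sMat, Matrix.mul_apply, Fin.sum_univ_succ]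

theorem mem_of_etaMap (g h : Matrix (Fin 2) (Fin 2) ℂ) (hx : etaMap g h ∈ GSp4C) :
    (g, h) ∈ HhatC := by
  obtain ⟨-, m, hm⟩ := hx
  rw [etaMap_J] at hm
  have h1 : g.det = m := by simpa [J4] using congrFun (congrFun hm 0) 3
  have h2 : h.det = m := by simpa [J4] using congrFun (congrFun hm 2) 1
  refine ⟨?_, ?_, h1.trans h2.symm⟩
  · exact (Matrix.isUnit_iff_isUnit_det _).2 ⟨m, h1.symm⟩
  · exact (Matrix.isUnit_iff_isUnit_det _).2 ⟨m, h2.symm⟩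

/-- `η` restricts to an injective group homomorphism on `Ĥ` with values in
`GSp₄(ℂ)`, and the centralizer of `s = diag(1,−1,−1,1)` in `GSp₄(ℂ)` is exactly the image
`η(Ĥ)`. -/
theorem stmt_10 :
    Set.InjOn (fun p : Matrix (Fin 2) (Fin 2) ℂ × Matrix (Fin 2) (Fin 2) ℂ =>
      etaMap p.1 p.2) HhatC ∧
    etaMap 1 1 = 1 ∧
    (∀ p ∈ HhatC, ∀ q ∈ HhatC, (p.1 * q.1, p.2 * q.2) ∈ HhatC ∧
      etaMap (p.1 * q.1) (p.2 * q.2) = etaMap p.1 p.2 * etaMap q.1 q.2) ∧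
    (∀ p ∈ HhatC, etaMap p.1 p.2 ∈ GSp4C) ∧
    {x ∈ GSp4C | x * sMat = sMat * x} =
      (fun p : Matrix (Fin 2) (Fin 2) ℂ × Matrix (Fin 2) (Fin 2) ℂ =>
        etaMap p.1 p.2) '' HhatC := by
  refine ⟨?_, etaMap_one, ?_, etaMap_mem, ?_⟩
  · intro p _ q _ e
    obtain ⟨h1, h2⟩ := etaMap_inj e
    exact Prod.ext h1 h2
  · intro p hp q hq
    refine ⟨⟨hp.1.mul hq.1, hp.2.1.mul hq.2.1, ?_⟩, etaMap_mul _ _ _ _⟩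
    simp only [Matrix.det_mul, hp.2.2, hq.2.2]
  · ext x
    constructor
    · rintro ⟨hx, hc⟩
      have e := eq_etaMap_of_comm x hc
      refine ⟨(_, _), mem_of_etaMap _ _ (e ▸ hx), e.symm⟩
    · rintro ⟨p, hp, rfl⟩
      exact ⟨etaMap_mem p hp, etaMap_comm _ _⟩
end
end
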